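/- Let p be a real number with 1 ≤ p < ∞. Let G : ℓ^m → ℓ^r be strictly causal, ℓ_p-stable and incrementally finite-gain ℓ_p-stable, and let K : ℓ^r → ℓ^m be a causal controller whose closed-loop map Φ_{G,K} is ℓ_p-stable (maps ℓ_p^r × ℓ_p^m into ℓ_p^r × ℓ_p^m). Define Q := K ∘ (I − G K)^{-1}, where I − G K : y ↦ y − G(K y) is a bijection with causal inverse (since G∘K is strictly causal). Then Q is causal and ℓ_p-stable, and K equals the internal-model controller built from Q: for every y ∈ ℓ^r, K y = Q ω, where ω is the unique sequence with ω = y − G(Q ω). -/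

import Mathlib

/-- Sequences with values in `ℝ^n` (with the Euclidean norm). -/
abbrev Traj (n : ℕ) : Type := ℕ → EuclideanSpace ℝ (Fin n)

/-- A causal operator on sequences. -/
def Causal {n m : ℕ} (A : Traj n → Traj m) : Prop :=
  ∀ (x x' : Traj n) (t : ℕ), (∀ s, s ≤ t → x s = x' s) → A x t = A x' t

/-- A strictly causal operator on sequences. -/
def StrictlyCausal {n m : ℕ} (A : Traj n → Traj m) : Prop :=
  ∀ (x x' : Traj n) (t : ℕ), (∀ s, s < t → x s = x' s) → A x t = A x' t

/-- Causal in the first argument, strictly causal in the second argument. -/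
def CausalSC {n q m : ℕ} (B : Traj n → Traj q → Traj m) : Prop :=
  ∀ (x x' : Traj n) (z z' : Traj q) (t : ℕ),
    (∀ s, s ≤ t → x s = x' s) → (∀ s, s < t → z s = z' s) → B x z t = B x' z' t

/-- Causal in both arguments. -/
def CausalCC {n q m : ℕ} (B : Traj n → Traj q → Traj m) : Prop :=
  ∀ (x x' : Traj n) (z z' : Traj q) (t : ℕ),
    (∀ s, s ≤ t → x s = x' s) → (∀ s, s ≤ t → z s = z' s) → B x z t = B x' z' t

/-- Strictly causal in both arguments. -/
def CausalSS {n q m : ℕ} (B : Traj n → Traj q → Traj m) : Prop :=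
  ∀ (x x' : Traj n) (z z' : Traj q) (t : ℕ),
    (∀ s, s < t → x s = x' s) → (∀ s, s < t → z s = z' s) → B x z t = B x' z' t

/-- Membership in `ℓ_p`: summability of `‖x t‖ ^ p`. -/
def InLp (p : ℝ) {E : Type*} [Norm E] (x : ℕ → E) : Prop :=
  Summable fun t => ‖x t‖ ^ p

/-- The `ℓ_p` norm `(∑ₜ ‖x t‖ ^ p) ^ (1/p)` of a sequence. -/
noncomputable def lpSeqNorm (p : ℝ) {E : Type*} [Norm E] (x : ℕ → E) : ℝ :=
  (∑' t, ‖x t‖ ^ p) ^ (1 / p)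

/-- The `ℝ^{r+m}`-valued sequence obtained by stacking `v` and `d`
(the norm of `(v t, d t)` is the Euclidean norm of the concatenated vector). -/
noncomputable def pairSeq {r m : ℕ} (v : Traj r) (d : Traj m) :
    ℕ → WithLp 2 (EuclideanSpace ℝ (Fin r) × EuclideanSpace ℝ (Fin m)) :=
  fun t => (WithLp.equiv 2 _).symm (v t, d t)

/-- An exponentially decaying sequence: `‖x t‖ ≤ k · α ^ t` with `k > 0`, `α ∈ (0,1)`. -/
def ExpDecay {E : Type*} [Norm E] (x : ℕ → E) : Prop :=
  ∃ k : ℝ, 0 < k ∧ ∃ α : ℝ, 0 < α ∧ α < 1 ∧ ∀ t, ‖x t‖ ≤ k * α ^ t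

/-!
If `F` is strictly causal, `y t = a t + F y t` determines `y t` from the past of `y`, so recursion
on time solves `y - F y = a` uniquely, and the solution up to time `t` depends on `a` up to time `t`
only: `I - F` is a bijection with causal inverse. Apply this to `F = G ∘ K` and put
`Q = K ∘ (I - G ∘ K)⁻¹`. Stability of `Q` is that of the closed-loop response `v ↦ u` at `d = 0`.
Writing `ω = y' - G (K y')`, so that `Q ω = K y'`, the internal-model equation `ω = y - G (Q ω)`
becomes `y' - G (K y') = y - G (K y')`, that is `y' = y`.
-/

section Causality

variable {ι α β γ : Type*} [Preorder ι]

/-- Causality of an operator on signals with an arbitrary preordered time set and arbitrary value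
types. `Causal` is the case of discrete time and Euclidean values, definitionally. -/
def IsCausal (A : (ι → α) → ι → β) : Prop :=
  ∀ (x x' : ι → α) (t : ι), (∀ s, s ≤ t → x s = x' s) → A x t = A x' t

/-- Strict causality of an operator on signals with an arbitrary preordered time set and arbitrary
value types. `StrictlyCausal` is the case of discrete time and Euclidean values, definitionally. -/
def IsStrictlyCausal (A : (ι → α) → ι → β) : Prop :=
  ∀ (x x' : ι → α) (t : ι), (∀ s, s < t → x s = x' s) → A x t = A x' t

theorem IsCausal.comp {A : (ι → β) → ι → γ} {B : (ι → α) → ι → β} (hA : IsCausal A)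
    (hB : IsCausal B) : IsCausal (A ∘ B) :=
  fun x x' t h => hA (B x) (B x') t fun s hs => hB x x' s fun q hq => h q (hq.trans hs)

namespace IsStrictlyCausal

theorem comp_isCausal {A : (ι → β) → ι → γ} {B : (ι → α) → ι → β} (hA : IsStrictlyCausal A)
    (hB : IsCausal B) : IsStrictlyCausal (A ∘ B) :=
  fun x x' t h => hA (B x) (B x') t fun s hs => hB x x' s fun q hq => h q (hq.trans_lt hs)

theorem const_add [Add β] {A : (ι → α) → ι → β} (hA : IsStrictlyCausal A) (b : ι → β) :
    IsStrictlyCausal fun x => b + A x :=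
  fun x x' t h => congrArg (b t + ·) (hA x x' t h)

theorem exists_isFixedPt [WellFoundedLT ι] [Nonempty α] {F : (ι → α) → ι → α}
    (hF : IsStrictlyCausal F) : ∃ y, Function.IsFixedPt F y := by
  classical
  let extend (t : ι) (past : ∀ s, s < t → α) : α :=
    F (fun s => if hs : s < t then past s hs else Classical.arbitrary α) t
  let y : ι → α := wellFounded_lt.fix extend
  refine ⟨y, funext fun t => ?_⟩
  have hy : y t = extend t fun s _ => y s := wellFounded_lt.fix_eq extend t
  rw [hy]
  exact hF _ _ t fun s hs => by simp only [dif_pos hs]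

variable {E : Type*} [AddGroup E] [WellFoundedLT ι] {F : (ι → E) → ι → E}

theorem eq_of_sub_eq_of_le (hF : IsStrictlyCausal F) {x x' : ι → E} {t : ι}
    (h : ∀ s, s ≤ t → (x - F x) s = (x' - F x') s) : x t = x' t := by
  induction t using WellFoundedLT.induction with
  | ind t ih =>
    have hFt : F x t = F x' t := hF x x' t fun s hs => ih s hs fun q hq => h q (hq.trans hs.le)
    simpa only [Pi.sub_apply, hFt, sub_left_inj] using h t le_rfl

theorem bijective_sub (hF : IsStrictlyCausal F) : Function.Bijective fun y => y - F y := by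
  refine ⟨fun x x' h => funext fun t => hF.eq_of_sub_eq_of_le fun s _ => congrFun h s, fun a => ?_⟩
  obtain ⟨y, hy⟩ := (hF.const_add a).exists_isFixedPt
  exact ⟨y, sub_eq_of_eq_add hy.symm⟩

/-- The bijection `I - F` of the signal space, for a strictly causal operator `F`. -/
noncomputable def subEquiv (hF : IsStrictlyCausal F) : (ι → E) ≃ (ι → E) :=
  Equiv.ofBijective (fun y => y - F y) hF.bijective_sub

theorem subEquiv_apply (hF : IsStrictlyCausal F) (y : ι → E) : hF.subEquiv y = y - F y := rfl

theorem isCausal_subEquiv_symm (hF : IsStrictlyCausal F) : IsCausal hF.subEquiv.symm := by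
  refine fun a a' t h => hF.eq_of_sub_eq_of_le fun s hs => ?_
  simpa only [← hF.subEquiv_apply, Equiv.apply_symm_apply] using h s hs

end IsStrictlyCausal

end Causality

section InternalModel

variable {ι E U : Type*} [Preorder ι] [WellFoundedLT ι] [AddGroup E]
  {G : (ι → U) → ι → E} {K : (ι → E) → ι → U}

/-- The internal-model parameter `Q = K ∘ (I - G ∘ K)⁻¹` of a causal controller `K` for a strictly
causal plant `G`. -/
noncomputable def internalModelParam (hG : IsStrictlyCausal G) (hK : IsCausal K) :
    (ι → E) → ι → U :=
  K ∘ (hG.comp_isCausal hK).subEquiv.symm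

theorem isCausal_internalModelParam (hG : IsStrictlyCausal G) (hK : IsCausal K) :
    IsCausal (internalModelParam hG hK) :=
  hK.comp (hG.comp_isCausal hK).isCausal_subEquiv_symm

theorem internalModelParam_sub (hG : IsStrictlyCausal G) (hK : IsCausal K) (y : ι → E) :
    internalModelParam hG hK (y - G (K y)) = K y :=
  congrArg K ((hG.comp_isCausal hK).subEquiv.symm_apply_apply y)

theorem eq_internalModelParam (hG : IsStrictlyCausal G) (hK : IsCausal K) {Q : (ι → E) → ι → U}
    (hQ : ∀ y, Q (y - G (K y)) = K y) : Q = internalModelParam hG hK :=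
  (hG.comp_isCausal hK).bijective_sub.surjective.injective_comp_right <|
    funext fun y => (hQ y).trans (internalModelParam_sub hG hK y).symm

theorem eq_sub_internalModelParam_iff (hG : IsStrictlyCausal G) (hK : IsCausal K) {y ω : ι → E} :
    ω = y - G (internalModelParam hG hK ω) ↔ ω = y - G (K y) := by
  obtain ⟨y', rfl⟩ : ∃ y', y' - G (K y') = ω := (hG.comp_isCausal hK).bijective_sub.surjective ω
  have hinj : y' - G (K y') = y - G (K y) ↔ y' = y :=
    (hG.comp_isCausal hK).bijective_sub.injective.eq_iff
  rw [internalModelParam_sub, sub_left_inj, hinj]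

/-- `hstab` is stability of the closed-loop response `v ↦ u` at `d = 0`, for arbitrary signal
classes: there `v = y - G (K y)` and `u = K y`. -/
theorem statement11_general (hG : IsStrictlyCausal G) (hK : IsCausal K)
    {Q : (ι → E) → ι → U} (hQ : ∀ y, Q (y - G (K y)) = K y)
    {V : Set (ι → E)} {W : Set (ι → U)} (hstab : ∀ y, y - G (K y) ∈ V → K y ∈ W) :
    IsCausal Q ∧ (∀ a, a ∈ V → Q a ∈ W) ∧ (∀ y, ∃! ω, ω = y - G (Q ω)) ∧
      (∀ y ω, ω = y - G (Q ω) → K y = Q ω) := by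
  obtain rfl := eq_internalModelParam hG hK hQ
  simp only [eq_sub_internalModelParam_iff]
  refine ⟨isCausal_internalModelParam hG hK, fun a ha => ?_, fun y => existsUnique_eq, ?_⟩
  · obtain ⟨y, rfl⟩ : ∃ y, y - G (K y) = a := (hG.comp_isCausal hK).bijective_sub.surjective a
    exact (internalModelParam_sub hG hK y).symm ▸ hstab y ha
  · rintro y _ rfl
    exact (internalModelParam_sub hG hK y).symm

end InternalModel

theorem inLp_zero {E : Type*} [SeminormedAddGroup E] {p : ℝ} (hp : p ≠ 0) :
    InLp p (0 : ℕ → E) := by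
  simp [InLp, Real.zero_rpow hp, summable_zero]

/-- necessity — every ℓ_p-stabilizing causal controller `K` for a strictly
causal, ℓ_p-stable, i.f.g. ℓ_p-stable plant `G` arises from the internal-model structure
with the causal ℓ_p-stable parameter `Q = K ∘ (I − G K)⁻¹`. -/
theorem statement11 {r m : ℕ} (p : ℝ) (hp : 1 ≤ p)
    (G : Traj m → Traj r) (K : Traj r → Traj m) (Q : Traj r → Traj m)
    (hG : StrictlyCausal G)
    (hGstab : ∀ u : Traj m, InLp p u → InLp p (G u))
    (hGifg : ∃ γ : ℝ, 0 ≤ γ ∧ ∀ u₁ u₂ : Traj m, InLp p u₁ → InLp p u₂ →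
      lpSeqNorm p (G u₁ - G u₂) ≤ γ * lpSeqNorm p (u₁ - u₂))
    (hK : Causal K)
    -- the closed-loop map of G and K is ℓ_p-stable
    (hCLstab : ∀ (v : Traj r) (d : Traj m) (y : Traj r) (u : Traj m),
      y = G u + v → u = K y + d → InLp p v → InLp p d → InLp p y ∧ InLp p u)
    -- Q := K ∘ (I − G K)⁻¹
    (hQdef : ∀ a y : Traj r, y - G (K y) = a → Q a = K y) :
    Causal Q ∧
    (∀ a : Traj r, InLp p a → InLp p (Q a)) ∧
    (∀ y : Traj r, ∃! ω : Traj r, ω = y - G (Q ω)) ∧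
    (∀ y ω : Traj r, ω = y - G (Q ω) → K y = Q ω) := by
  exact statement11_general (V := {v | InLp p v}) (W := {u | InLp p u}) hG hK
    (fun y => hQdef _ y rfl) fun y hv =>
      (hCLstab _ 0 y (K y) (by abel) (add_zero _).symm hv (inLp_zero (by positivity))).2
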